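/- Let r ∈ ℚ², let A = [[a,b],[c,d]] ∈ Γ_r and τ ∈ ℍ. Then (cτ+d) · θ_r(A·τ) · η(τ)³ = χ_r(A) · θ_r(τ) · η(A·τ)³. (Equivalently, θ_r(τ)/η(τ)³ is a weight −1 modular form for Γ_r with character χ_r; this is the character part of the weight 1/2 modularity of the theta null θ_r.) -/

import Mathlib

/-!
Up to the constant `e((r₁r₂ - r₂)/2)`, the quotient `θ_r / η³` is the Klein form `K_r` (`klein`). With
this normalization the Klein form satisfies `(cτ + d) K_{Av}(Aτ) = K_v(τ)` for every `A ∈ SL₂(ℤ)` and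
every pair `v` of characteristics, without any multiplier (`klein_SL`). This is checked on the
generators `S` and `T`: for `T` term by term in the theta series (`klein_T`), for `S` from the
functional equation of the two-variable Jacobi theta function and `η(-1/τ) = √(-iτ) η(τ)`
(`klein_S`).

If `A ∈ Γ_r`, then `A⁻¹r` differs from `r` by an integral vector. Applying the transformation law
to `v = A⁻¹r` gives `(cτ + d) K_r(Aτ) = K_{A⁻¹r}(τ)`, and the integral translation changes `K_r(τ)`
by an explicit factor (`klein_sub_int`), which is `χ_r(A)` by the definition of the latter and
`ad - bc = 1`.
-/

open Complex

/-- `e(z) = exp(2πiz)`. -/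
noncomputable def ee (z : ℂ) : ℂ := Complex.exp (2 * Real.pi * Complex.I * z)

/-- The Dedekind eta function `η(τ) = e(τ/24) ∏_{k≥1} (1 − e(kτ))`. -/
noncomputable def dedekindEta (τ : ℂ) : ℂ :=
  ee (τ / 24) * ∏' k : ℕ, (1 - ee (((k : ℂ) + 1) * τ))

/-- The theta null with characteristics `r = (r₁, r₂) ∈ ℚ²`. -/
noncomputable def thetaNull (r : ℚ × ℚ) (τ : ℂ) : ℂ :=
  ∑' n : ℤ, ee ((1/2) * ((n : ℂ) + (r.2 : ℂ) + 1/2)^2 * τ +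
    ((n : ℂ) + (r.2 : ℂ) + 1/2) * (-(r.1 : ℂ) + 1/2))

/-- Membership of `[[a,b],[c,d]]` in the congruence group `Γ_r`. -/
def inGamma (r : ℚ × ℚ) (a b c d : ℤ) : Prop :=
  a * d - b * c = 1 ∧ (∃ m : ℤ, (a : ℚ) * r.1 + (b : ℚ) * r.2 - r.1 = m)
    ∧ (∃ n : ℤ, (c : ℚ) * r.1 + (d : ℚ) * r.2 - r.2 = n)

/-- The character `χ_r(A)` on `Γ_r`. -/
noncomputable def chi (r : ℚ × ℚ) (a b c d : ℤ) : ℂ :=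
  ee ((1/2) * (((c : ℂ) - (d : ℂ) + 1) * (r.1 : ℂ) + (-(a : ℂ) + (b : ℂ) + 1) * (r.2 : ℂ)
    - (c : ℂ) * (d : ℂ) * (r.1 : ℂ)^2
    + 2 * ((a : ℂ) - 1) * (d : ℂ) * (r.1 : ℂ) * (r.2 : ℂ)
    - ((a : ℂ) - 2) * (b : ℂ) * (r.2 : ℂ)^2))

lemma ee_add (z w : ℂ) : ee (z + w) = ee z * ee w := by
  simp only [ee, mul_add, Complex.exp_add]

lemma ee_int (n : ℤ) : ee n = 1 := by
  rw [ee, mul_comm]; exact Complex.exp_int_mul_two_pi_mul_I n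

lemma ee_congr {z w : ℂ} (n : ℤ) (h : z - w = n) : ee z = ee w := by
  rw [← sub_add_cancel z w, ee_add, h, ee_int, one_mul]

lemma ee_ne_zero (z : ℂ) : ee z ≠ 0 := Complex.exp_ne_zero _

lemma ee_nat_mul (n : ℕ) (z : ℂ) : ee (n * z) = ee z ^ n := by
  simp only [ee, ← Complex.exp_nat_mul]; ring_nf

lemma dedekindEta_eq_eta : dedekindEta = ModularForm.eta := by
  funext τ
  simp only [dedekindEta, ModularForm.eta, ModularForm.eta_q_eq_cexp, ee, Function.Periodic.qParam]
  congr 2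
  · push_cast; ring_nf
  · ext k; ring_nf

lemma dedekindEta_add_one_pow (τ : ℂ) :
    dedekindEta (τ + 1) ^ 3 = ee (1 / 8) * dedekindEta τ ^ 3 := by
  have h : ∀ k : ℕ, ee (((k : ℂ) + 1) * (τ + 1)) = ee (((k : ℂ) + 1) * τ) := fun k ↦ by
    rw [mul_add, ee_add]
    have := ee_int (k + 1)
    push_cast at this
    rw [mul_one, this, mul_one]
  simp only [dedekindEta, h, mul_pow, add_div, ee_add, ← ee_nat_mul]
  norm_num; ring

/-- Mathlib states the inversion formula with the factor `√τ / √i`; this is the principal branch of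
`√(-iτ)`, the form in which the factor occurs in `jacobiTheta₂_functional_equation`. -/
lemma dedekindEta_S (τ : ℂ) (hτ : 0 < τ.im) :
    dedekindEta (-1 / τ) = (-Complex.I * τ) ^ (1 / 2 : ℂ) * dedekindEta τ := by
  have h := ModularForm.eta_comp_eq_csqrt_I_inv (show τ ∈ UpperHalfPlane.upperHalfPlaneSet from hτ)
  simp only [Function.comp_apply, Pi.smul_apply, Pi.mul_apply, smul_eq_mul] at h
  rw [dedekindEta_eq_eta, h, ← mul_assoc]
  congr 1
  have h0 : τ ≠ 0 := fun h ↦ by simp [h] at hτ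
  have hl : Complex.log (-Complex.I * τ) = Complex.log (-Complex.I) + Complex.log τ := by
    apply (Complex.log_mul_eq_add_log_iff (by simp) h0).2
    rw [Complex.arg_neg_I]
    have h1 := Complex.arg_nonneg_iff.2 hτ.le
    have h2 := Complex.arg_le_pi τ
    constructor <;> linarith [Real.pi_pos]
  rw [Complex.cpow_def_of_ne_zero (by simp [h0]), hl, Complex.sqrt, Complex.sqrt,
    Complex.cpow_def_of_ne_zero h0, Complex.cpow_def_of_ne_zero Complex.I_ne_zero,
    ← Complex.exp_neg, ← Complex.exp_add,
    Complex.log_neg_I, Complex.log_I]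
  ring_nf

/-- The Klein form with characteristics `(x, y)`, encoded as `θ_{(x,y)} / η³`. The constant factor
`e((xy - y)/2)`, which does not depend on `τ`, is the normalization for which the transformation law
`klein_SL` under `SL₂(ℤ)` carries no multiplier. The characteristics are arbitrary complex
numbers. -/
noncomputable def klein (x y τ : ℂ) : ℂ :=
  ee ((x * y - y) / 2) * (∑' n : ℤ, ee ((1/2) * ((n : ℂ) + y + 1/2)^2 * τ +
    ((n : ℂ) + y + 1/2) * (-x + 1/2))) / dedekindEta τ ^ 3

/-- Quasi-periodicity of the Klein form in its characteristics: shifting `y` by `n` only reindexes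
the theta series, and shifting `x` by `m` multiplies its terms by a common factor. -/
lemma klein_sub_int (x y τ : ℂ) (m n : ℤ) :
    klein (x - m) (y - n) τ = ee ((m + n + m * n + m * y - n * x) / 2) * klein x y τ := by
  simp only [klein]
  rw [mul_div_assoc', ← mul_assoc, ← tsum_mul_left, ← tsum_mul_left]
  congr 1
  rw [← (Equiv.addRight n).tsum_eq]
  refine tsum_congr fun k ↦ ?_
  simp only [Equiv.coe_addRight, Int.cast_add, ← ee_add]
  refine ee_congr (k * m) ?_
  push_cast
  ring

/-- Under `τ ↦ τ + 1` the eighth root of unity from `η³` cancels the one from the theta series, as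
`((k + 1/2)² - 1/4) / 2 = k(k + 1)/2` is an integer. -/
lemma klein_T (x y τ : ℂ) : klein (x + y) y (τ + 1) = klein x y τ := by
  simp only [klein, dedekindEta_add_one_pow]
  rw [← mul_div_mul_left _ (dedekindEta τ ^ 3) (ee_ne_zero (1 / 8))]
  congr 1
  simp only [← tsum_mul_left]
  refine tsum_congr fun k ↦ ?_
  obtain ⟨j, hj⟩ := Int.even_mul_succ_self k
  have hj' : (k : ℂ) * (k + 1) = j + j := by exact_mod_cast hj
  simp only [← ee_add]
  refine ee_congr j ?_
  linear_combination hj' / 2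

lemma klein_eq_jacobiTheta (x y τ : ℂ) :
    klein x y τ = ee ((x * y - y) / 2 + (1 / 2) * (y + 1 / 2) ^ 2 * τ + (y + 1 / 2) * (1 / 2 - x)) *
      jacobiTheta₂ ((y + 1 / 2) * τ - x + 1 / 2) τ / dedekindEta τ ^ 3 := by
  simp only [klein, jacobiTheta₂, ← tsum_mul_left]
  congr 1
  refine tsum_congr fun k ↦ ?_
  simp only [jacobiTheta₂_term, ee, ← Complex.exp_add]
  ring_nf

/-- Under `τ ↦ -1/τ` the theta series picks up `√(-iτ)` and `η³` picks up `(√(-iτ))³`; the quotient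
is `1/(-iτ)`, and the remaining fourth root of unity cancels the exponential prefactors. -/
lemma klein_S (x y τ : ℂ) (hτ : 0 < τ.im) : τ * klein (-y) x (-1 / τ) = klein x y τ := by
  have h0 : τ ≠ 0 := fun h ↦ by simp [h] at hτ
  have hη : dedekindEta τ ≠ 0 := by
    rw [dedekindEta_eq_eta]; exact ModularForm.eta_ne_zero hτ
  have hs2 : ((-Complex.I * τ) ^ (1 / 2 : ℂ)) ^ 2 = -Complex.I * τ := by
    rw [← Complex.cpow_nat_mul]; norm_num
  have hs0 : (-Complex.I * τ) ^ (1 / 2 : ℂ) ≠ 0 := by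
    intro h; rw [h] at hs2; simp [h0] at hs2
  rw [klein_eq_jacobiTheta, klein_eq_jacobiTheta, dedekindEta_S τ hτ,
    jacobiTheta₂_functional_equation _ τ]
  generalize hs : (-Complex.I * τ) ^ (1 / 2 : ℂ) = s at *
  have hs3 : s ^ 3 = -Complex.I * τ * s := by rw [← hs2]; ring
  rw [show (x + 1 / 2) * (-1 / τ) - -y + 1 / 2
    = ((y + 1 / 2) * τ - x + 1 / 2) / τ + -1 / τ by field_simp; ring,
    jacobiTheta₂_add_left', mul_pow, hs3]
  generalize jacobiTheta₂ (((y + 1 / 2) * τ - x + 1 / 2) / τ) (-1 / τ) = J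
  have hI : Complex.I * Complex.I = -1 := Complex.I_mul_I
  have hI4 : ee (1 / 4) = Complex.I := by
    rw [ee, show 2 * (Real.pi : ℂ) * Complex.I * (1 / 4) = Real.pi / 2 * Complex.I by ring,
      Complex.exp_pi_div_two_mul_I]
  have key : ee (1 / 4) * (ee ((-y * x - x) / 2 + 1 / 2 * (x + 1 / 2) ^ 2 * (-1 / τ)
      + (x + 1 / 2) * (1 / 2 - -y)) *
      Complex.exp (-Real.pi * Complex.I * (-1 / τ + 2 * (((y + 1 / 2) * τ - x + 1 / 2) / τ)))) =
      ee ((x * y - y) / 2 + 1 / 2 * (y + 1 / 2) ^ 2 * τ + (y + 1 / 2) * (1 / 2 - x)) *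
      Complex.exp (-Real.pi * Complex.I * ((y + 1 / 2) * τ - x + 1 / 2) ^ 2 / τ) := by
    simp only [ee, ← Complex.exp_add]
    congr 1
    field_simp
    ring
  rw [hI4] at key
  generalize ee _ = u at key ⊢
  generalize ee _ = v at key ⊢
  generalize Complex.exp _ = w at key ⊢
  generalize Complex.exp _ = w' at key ⊢
  field_simp
  linear_combination J * Complex.I * key - J * u * w * hI

/-- The Klein form is of weight `-1` with trivial multiplier under the whole of `SL₂(ℤ)`, provided the
matrix acts on the column of characteristics as well: `(cτ + d) K_{gv}(gτ) = K_v(τ)`. The law is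
compatible with products and inverses, so it suffices to know it for `S` and `T`. -/
lemma klein_SL (g : Matrix.SpecialLinearGroup (Fin 2) ℤ) : ∀ (x y : ℂ) (τ : UpperHalfPlane),
    ((g 1 0 : ℂ) * τ + g 1 1) * klein (g 0 0 * x + g 0 1 * y) (g 1 0 * x + g 1 1 * y)
      ((g • τ : UpperHalfPlane) : ℂ) = klein x y τ := by
  -- Non-vanishing of the automorphy factor, with the entries of `g` cast from `ℤ` to `ℂ` directly.
  have hj (g : Matrix.SpecialLinearGroup (Fin 2) ℤ) (τ : UpperHalfPlane) :
      (g 1 0 : ℂ) * τ + g 1 1 ≠ 0 := by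
    simpa [UpperHalfPlane.denom] using UpperHalfPlane.denom_ne_zero g τ
  have hg : g ∈ Subgroup.closure {ModularGroup.S, ModularGroup.T} := by
    simp [SpecialLinearGroup.SL2Z_generators]
  induction hg using Subgroup.closure_induction with
  | one => intro x y τ; simp
  | mem g h =>
    intro x y τ
    rcases h with rfl | rfl
    · rw [← klein_S x y τ τ.im_pos, UpperHalfPlane.modular_S_smul]
      simp [ModularGroup.S, neg_div, inv_neg]
    · rw [← klein_T x y τ, UpperHalfPlane.modular_T_smul]
      simp [ModularGroup.T, add_comm]
  | mul g h _ _ ihg ihh =>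
    intro x y τ
    rw [← ihh x y τ, ← ihg _ _ (h • τ), mul_smul, ← mul_assoc]
    congr 1
    · rw [UpperHalfPlane.coe_specialLinearGroup_apply]
      have := hj h τ
      simp only [Matrix.SpecialLinearGroup.coe_mul, Matrix.mul_apply, Fin.sum_univ_two]
      simp only [algebraMap_int_eq, eq_intCast, Complex.ofReal_intCast, Int.cast_add, Int.cast_mul]
      field_simp
      ring
    · simp only [Matrix.SpecialLinearGroup.coe_mul, Matrix.mul_apply, Fin.sum_univ_two]
      push_cast
      congr 1 <;> ring
  | inv g _ ih =>
    intro x y τ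
    have hd : (g 0 0 : ℂ) * g 1 1 - g 0 1 * g 1 0 = 1 := by
      exact_mod_cast (Matrix.det_fin_two g.1).symm.trans g.2
    have h00 : g⁻¹ 0 0 = g 1 1 := by simp [Matrix.SpecialLinearGroup.SL2_inv_expl]
    have h01 : g⁻¹ 0 1 = -g 0 1 := by simp [Matrix.SpecialLinearGroup.SL2_inv_expl]
    have h10 : g⁻¹ 1 0 = -g 1 0 := by simp [Matrix.SpecialLinearGroup.SL2_inv_expl]
    have h11 : g⁻¹ 1 1 = g 0 0 := by simp [Matrix.SpecialLinearGroup.SL2_inv_expl]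
    have hj' := hj g⁻¹ τ
    have h := ih (g⁻¹ 0 0 * x + g⁻¹ 0 1 * y) (g⁻¹ 1 0 * x + g⁻¹ 1 1 * y) (g⁻¹ • τ)
    rw [smul_inv_smul, UpperHalfPlane.coe_specialLinearGroup_apply] at h
    rw [UpperHalfPlane.coe_specialLinearGroup_apply, ← h]
    simp only [h00, h01, h10, h11, algebraMap_int_eq, eq_intCast, Complex.ofReal_intCast,
      Complex.ofReal_neg, Int.cast_neg] at hj' ⊢
    rw [show (g 0 0 : ℂ) * (g 1 1 * x + -g 0 1 * y) + g 0 1 * (-g 1 0 * x + g 0 0 * y) = x by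
        linear_combination x * hd,
      show (g 1 0 : ℂ) * (g 1 1 * x + -g 0 1 * y) + g 1 1 * (-g 1 0 * x + g 0 0 * y) = y by
        linear_combination y * hd, ← mul_assoc]
    convert one_mul _ using 2
    rw [mul_div_assoc', div_add' _ _ _ hj', mul_div_cancel₀ _ hj']
    linear_combination hd

/-- Character part of the weight `1/2` modularity of the theta null `θ_r`:
`(cτ+d)·θ_r(A·τ)·η(τ)³ = χ_r(A)·θ_r(τ)·η(A·τ)³` for `A ∈ Γ_r`. -/
theorem thetaNull_modular (r : ℚ × ℚ) (a b c d : ℤ) (hA : inGamma r a b c d)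
    (τ : ℂ) (hτ : 0 < τ.im) :
    ((c : ℂ) * τ + (d : ℂ))
        * thetaNull r (((a : ℂ) * τ + (b : ℂ)) / ((c : ℂ) * τ + (d : ℂ)))
        * (dedekindEta τ)^3
      = chi r a b c d * thetaNull r τ
        * (dedekindEta (((a : ℂ) * τ + (b : ℂ)) / ((c : ℂ) * τ + (d : ℂ))))^3 := by
  obtain ⟨hdet, ⟨m, hm⟩, ⟨n, hn⟩⟩ := hA
  obtain ⟨x, y⟩ := r
  simp only at hm hn
  have hm' : (a : ℂ) * x + b * y - x = m := by exact_mod_cast congrArg (Rat.cast : ℚ → ℂ) hm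
  have hn' : (c : ℂ) * x + d * y - y = n := by exact_mod_cast congrArg (Rat.cast : ℚ → ℂ) hn
  have hdetC : (a : ℂ) * d - b * c = 1 := by exact_mod_cast hdet
  obtain ⟨g, hg⟩ : ∃ g : Matrix.SpecialLinearGroup (Fin 2) ℤ, g.1 = !![a, b; c, d] :=
    ⟨⟨!![a, b; c, d], by rw [Matrix.det_fin_two_of]; exact hdet⟩, rfl⟩
  -- The characteristics are those of `A⁻¹ r`, so that the matrix carries them to `r`.
  have hK := klein_SL g (d * x - b * y) (a * y - c * x) ⟨τ, hτ⟩
  have him := (g • (⟨τ, hτ⟩ : UpperHalfPlane)).im_pos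
  rw [← UpperHalfPlane.coe_im] at him
  rw [UpperHalfPlane.coe_specialLinearGroup_apply] at hK him
  simp only [hg, Matrix.of_apply, Matrix.cons_val', Matrix.cons_val_zero, Matrix.cons_val_one,
    Matrix.cons_val_fin_one, algebraMap_int_eq, eq_intCast, Complex.ofReal_intCast] at hK him
  set σ := ((a : ℂ) * τ + b) / (c * τ + d) with hσ
  -- `(m, n) = (A - 1) r`, hence `A⁻¹ r = r - A⁻¹ (m, n)` is an integral translate of `r`, with
  -- `A⁻¹ (m, n) = (dm - bn, an - cm)`.
  have hS := klein_sub_int x y τ (d * m - b * n) (a * n - c * m)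
  rw [show (x : ℂ) - (d * m - b * n : ℤ) = d * x - b * y by
      push_cast; rw [← hm', ← hn']; linear_combination (-x : ℂ) * hdetC,
    show (y : ℂ) - (a * n - c * m : ℤ) = a * y - c * x by
      push_cast; rw [← hm', ← hn']; linear_combination (-y : ℂ) * hdetC, ← hK,
    show (a : ℂ) * (d * x - b * y) + b * (a * y - c * x) = x by
      linear_combination (x : ℂ) * hdetC,
    show (c : ℂ) * (d * x - b * y) + d * (a * y - c * x) = y by
      linear_combination (y : ℂ) * hdetC] at hS
  have hp : (d * m - b * n : ℂ) = (1 - d) * x + b * y := by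
    rw [← hm', ← hn']; linear_combination (x : ℂ) * hdetC
  have hq : (a * n - c * m : ℂ) = c * x + (1 - a) * y := by
    rw [← hm', ← hn']; linear_combination (y : ℂ) * hdetC
  -- The translation factor is exactly `χ_r(A)`.
  have hchi : chi (x, y) a b c d = ee (((d * m - b * n : ℤ) + (a * n - c * m : ℤ)
      + (d * m - b * n : ℤ) * (a * n - c * m : ℤ) + (d * m - b * n : ℤ) * y
      - (a * n - c * m : ℤ) * x) / 2) := by
    rw [chi]
    congr 1
    push_cast
    rw [hp, hq]
    linear_combination (x * y / 2 : ℂ) * hdetC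
  rw [← hchi] at hS
  have hth (t : ℂ) (ht : 0 < t.im) : thetaNull (x, y) t =
      klein x y t * dedekindEta t ^ 3 * ee (-((x * y - y) / 2)) := by
    have hη : dedekindEta t ≠ 0 := by
      rw [dedekindEta_eq_eta]; exact ModularForm.eta_ne_zero ht
    have he := ee_add ((x * y - y) / 2) (-((x * y - y) / 2))
    rw [add_neg_cancel, show ee 0 = 1 by simp [ee]] at he
    rw [klein, thetaNull]
    rw [div_mul_cancel₀ _ (pow_ne_zero 3 hη), mul_right_comm, ← he, one_mul]
  rw [hth τ hτ, hth σ him]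
  linear_combination dedekindEta σ ^ 3 * dedekindEta τ ^ 3 * ee (-((x * y - y) / 2)) * hS
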